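/- (Formal interpolation lemma) Let U ⊆ ℝ^s be open and let f_μ : U → ℝ^s be a family of maps, jointly analytic in (x,μ) for x ∈ U and |μ| ≤ μ̄, with f₀ equal to the identity. Then there is a unique sequence of analytic functions g_k : U → ℝ^s (k ≥ 1) such that for every m ∈ ℕ and every x ∈ U, the time-one map Φ¹_{G_m} of the vector field G_m = Σ_{k=1}^m μ^k g_k satisfies f_μ(x) − Φ¹_{G_m}(x) = O(μ^{m+1}) as μ → 0. Moreover, for every x ∈ U and m ∈ ℕ there is μ_m(x) > 0 such that for |μ| ≤ μ_m(x) the iterates f_μ^k(x) ∈ U for 0 ≤ k ≤ m, and the interpolating vector field X_m(x) = Σ_{k=1}^m ((−1)^{k−1}/k) Δ_k(x) of f_μ satisfies X_m(x) = G_m(x) + O(μ^{m+1}) as μ → 0. -/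

import Mathlib

/-- Newton finite differences of a map `f`: `Δ₀(x) = x`,
`Δ_k(x) = Δ_{k−1}(f(x)) − Δ_{k−1}(x)`. -/
def finDiff {α : Type*} [AddCommGroup α] (f : α → α) : ℕ → α → α
  | 0, x => x
  | k + 1, x => finDiff f k (f x) - finDiff f k x

/-- `g` is a sequence of coefficient vector fields whose truncated flows interpolate the
family `f_μ` to all orders: for every `m` and `x ∈ U`, the time-one map of
`G_m = Σ_{k=1}^m μ^k g_k` differs from `f_μ(x)` by `O(μ^{m+1})` as `μ → 0`. -/
def FormalInterpolation (s : ℕ) (U : Set (Fin s → ℝ))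
    (f : ℝ → (Fin s → ℝ) → (Fin s → ℝ)) (g : ℕ → (Fin s → ℝ) → (Fin s → ℝ)) : Prop :=
  ∀ m : ℕ, ∀ x ∈ U, ∃ C > (0 : ℝ), ∃ μ' > (0 : ℝ), ∀ μ : ℝ, |μ| ≤ μ' →
    ∃ γ : ℝ → Fin s → ℝ, γ 0 = x ∧
      (∀ t ∈ Set.Icc (0 : ℝ) 1, γ t ∈ U ∧
        HasDerivAt γ (∑ k ∈ Finset.Icc 1 m, μ ^ k • g k (γ t)) t) ∧
      ‖f μ x - γ 1‖ ≤ C * |μ| ^ (m + 1)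

/-!
Write `G = μ H` with `H` a power series in `μ`. The time-one map of `G` expands formally as the Lie
series `exp(μH)`, and adding `μ^n w` to `H` changes it by `μ^(n+1) w` to leading order. So if `H` is
known up to order `n`, the leading coefficient of the error `f - exp(μH)` is exactly the next
coefficient of `H`: it can be chosen, and it can only be chosen, in one way.

Since every step of the iteration is `O(μ^(m+1))` close to the flow `γ` of `G_m`, the iterates
`f_μ^j(x)` are `O(μ^(m+1))` close to `γ(j)` for `j ≤ m`, hence to a polynomial in `j` of degree `m`
with derivative `G_m(x)` at `j = 0`. Newton's formula `X_m` for this derivative is exact on such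
polynomials.
-/

open Filter Topology Asymptotics Set
open scoped Nat

section Newton

variable {G : Type*}

theorem finDiff_iterate [AddCommGroup G] (f : G → G) (k n : ℕ) (x : G) :
    finDiff f k (f^[n] x) = (fwdDiff 1)^[k] (fun j => f^[j] x) n := by
  induction k generalizing n with
  | zero => rfl
  | succ k ih =>
    rw [Function.iterate_succ_apply' (fwdDiff 1), fwdDiff, finDiff, ← ih, ← ih,
      Function.iterate_succ_apply']

theorem fwdDiff_iter_succ_nsmul [AddCommGroup G] (b : ℕ → G) (k n : ℕ) :
    (fwdDiff 1)^[k + 1] (fun j => j • b j) n =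
      n • (fwdDiff 1)^[k + 1] b n + (k + 1) • (fwdDiff 1)^[k] b (n + 1) := by
  induction k generalizing n with
  | zero => simp [fwdDiff, add_smul, smul_sub]; abel
  | succ k ih =>
    rw [Function.iterate_succ_apply' (fwdDiff 1), fwdDiff, ih, ih,
      Function.iterate_succ_apply' (fwdDiff 1) (k + 1), fwdDiff,
      Function.iterate_succ_apply' (fwdDiff 1) k, fwdDiff, fwdDiff]
    module

theorem fwdDiff_iter_succ_const_add [AddCommGroup G] (c : G) (a : ℕ → G) (k n : ℕ) :
    (fwdDiff 1)^[k + 1] (fun j => c + a j) n = (fwdDiff 1)^[k + 1] a n := by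
  have hcancel : fwdDiff 1 (fun j => c + a j) = fwdDiff 1 a := by ext j; simp [fwdDiff]
  rw [Function.iterate_succ_apply, Function.iterate_succ_apply, hcancel]

variable [AddCommGroup G] [Module ℝ G]

theorem sum_range_succ_pow_smul (c : ℕ → G) (r : ℝ) (n : ℕ) :
    ∑ i ∈ Finset.range (n + 1), r ^ i • c i =
      c 0 + r • ∑ i ∈ Finset.range n, r ^ i • c (i + 1) := by
  simp only [Finset.sum_range_succ', Finset.smul_sum, smul_smul, pow_succ', pow_zero, one_smul,
    add_comm]

theorem fwdDiff_iter_sum_pow_smul_eq_zero (c : ℕ → G) (m n : ℕ) :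
    (fwdDiff 1)^[m] (fun j : ℕ => ∑ i ∈ Finset.range m, (j : ℝ) ^ i • c i) n = 0 := by
  induction m generalizing c n with
  | zero => simp
  | succ m ih =>
    simp only [sum_range_succ_pow_smul, Nat.cast_smul_eq_nsmul]
    rw [fwdDiff_iter_succ_const_add, fwdDiff_iter_succ_nsmul,
      Function.iterate_succ_apply' (fwdDiff 1) m, fwdDiff]
    simp only [ih, sub_zero, smul_zero, add_zero]

/-- Newton's forward-difference approximation `∑_{k=1}^m (-1)^(k-1)/k Δ^k a(0)` of order `m` to the
derivative at `0` of a sequence sampled at the natural numbers. -/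
noncomputable def newtonDeriv (m : ℕ) (a : ℕ → G) : G :=
  ∑ k ∈ Finset.Icc 1 m, ((-1 : ℝ) ^ (k - 1) / k) • (fwdDiff 1)^[k] a 0

theorem sum_finDiff_eq_newtonDeriv (f : G → G) (m : ℕ) (x : G) :
    ∑ k ∈ Finset.Icc 1 m, ((-1 : ℝ) ^ (k - 1) / k) • finDiff f k x =
      newtonDeriv m fun j => f^[j] x :=
  Finset.sum_congr rfl fun k _ => by rw [← finDiff_iterate f k 0 x, Function.iterate_zero, id]

theorem newtonDeriv_sub (m : ℕ) (a b : ℕ → G) :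
    newtonDeriv m (fun j => a j - b j) = newtonDeriv m a - newtonDeriv m b := by
  have hsub (k : ℕ) : (fwdDiff 1)^[k] (fun j => a j - b j) 0 =
      (fwdDiff 1)^[k] a 0 - (fwdDiff 1)^[k] b 0 := by
    rw [fwdDiff_iter_eq_sum_shift, fwdDiff_iter_eq_sum_shift, fwdDiff_iter_eq_sum_shift,
      ← Finset.sum_sub_distrib]
    simp only [smul_sub]
  simp only [newtonDeriv, hsub, smul_sub, Finset.sum_sub_distrib]

theorem newtonDeriv_const_add (m : ℕ) (c : G) (a : ℕ → G) :
    newtonDeriv m (fun j => c + a j) = newtonDeriv m a := by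
  refine Finset.sum_congr rfl fun k hk => ?_
  obtain ⟨k, rfl⟩ := Nat.exists_eq_add_of_le' (Finset.mem_Icc.1 hk).1
  rw [fwdDiff_iter_succ_const_add]

-- By the Leibniz rule for differences the terms of the sum are `±(Δ^k b 0 + Δ^(k-1) b 0)`, so that
-- it telescopes.
theorem newtonDeriv_nsmul (m : ℕ) (b : ℕ → G) :
    newtonDeriv m (fun j => j • b j) = b 0 - (-1 : ℝ) ^ m • (fwdDiff 1)^[m] b 0 := by
  induction m with
  | zero => simp [newtonDeriv]
  | succ m ih =>
    have hm : (m + 1 : ℝ) ≠ 0 := by positivity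
    have hnext : (fwdDiff 1)^[m + 1] b 0 = (fwdDiff 1)^[m] b 1 - (fwdDiff 1)^[m] b 0 := by
      rw [Function.iterate_succ_apply' (fwdDiff 1), fwdDiff]
    rw [newtonDeriv, Finset.sum_Icc_succ_top (by lia), ← newtonDeriv, ih, fwdDiff_iter_succ_nsmul,
      zero_smul, zero_add, zero_add, ← Nat.cast_smul_eq_nsmul ℝ, smul_smul, Nat.add_sub_cancel,
      Nat.cast_succ, div_mul_cancel₀ _ hm, hnext, pow_succ]
    module

theorem newtonDeriv_sum_pow_smul {m : ℕ} (hm : 1 ≤ m) (c : ℕ → G) :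
    newtonDeriv m (fun j => ∑ i ∈ Finset.range (m + 1), (j : ℝ) ^ i • c i) = c 1 := by
  obtain ⟨m, rfl⟩ := Nat.exists_eq_add_of_le' hm
  simp only [sum_range_succ_pow_smul c, Nat.cast_smul_eq_nsmul]
  rw [newtonDeriv_const_add, newtonDeriv_nsmul, fwdDiff_iter_sum_pow_smul_eq_zero]
  simp [Finset.sum_range_succ']

end Newton

theorem isBigO_newtonDeriv {ι G : Type*} [NormedAddCommGroup G] [NormedSpace ℝ G] {l : Filter ι}
    {a : ι → ℕ → G} {b : ι → ℝ} {m : ℕ} (ha : ∀ j ≤ m, (a · j) =O[l] b) :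
    (fun i => newtonDeriv m (a i)) =O[l] b := by
  have hdiff (k n : ℕ) (hkn : k + n ≤ m) : (fun i => (fwdDiff 1)^[k] (a i) n) =O[l] b := by
    induction k generalizing n with
    | zero => exact ha n (by lia)
    | succ k ih =>
      simp only [Function.iterate_succ_apply' (fwdDiff 1), fwdDiff]
      exact (ih (n + 1) (by lia)).sub (ih n (by lia))
  exact IsBigO.fun_sum fun k hk =>
    (hdiff k 0 (Finset.mem_Icc.1 hk).2).const_smul_left ((-1 : ℝ) ^ (k - 1) / k)

section LieDeriv

variable {X G : Type*} [NormedAddCommGroup X] [NormedSpace ℝ X] [NormedAddCommGroup G]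
  [NormedSpace ℝ G] {V : X → X} {ψ : X → G} {z : X}

/-- The derivative of the function `ψ` along the vector field `V`. -/
noncomputable def lieDeriv (V : X → X) (ψ : X → G) (z : X) : G :=
  fderiv ℝ ψ z (V z)

theorem analyticAt_lieDeriv [CompleteSpace G] (hV : AnalyticAt ℝ V z) (hψ : AnalyticAt ℝ ψ z) :
    AnalyticAt ℝ (lieDeriv V ψ) z :=
  AnalyticAt.fun_comp (g := fun p : (X →L[ℝ] G) × X => p.1 p.2)
    ((ContinuousLinearMap.id ℝ (X →L[ℝ] G)).analyticAt_bilinear _) (hψ.fderiv.prod hV)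

theorem analyticAt_lieDeriv_iterate [CompleteSpace G] (hV : AnalyticAt ℝ V z)
    (hψ : AnalyticAt ℝ ψ z) (k : ℕ) : AnalyticAt ℝ ((lieDeriv V)^[k] ψ) z := by
  induction k with
  | zero => exact hψ
  | succ k ih => simpa only [Function.iterate_succ_apply'] using analyticAt_lieDeriv hV ih

theorem hasDerivWithinAt_comp_of_smul_field {γ : ℝ → X} {ε t : ℝ} {s : Set ℝ}
    (hψ : DifferentiableAt ℝ ψ (γ t)) (hγ : HasDerivWithinAt γ (ε • V (γ t)) s t) :
    HasDerivWithinAt (fun t => ψ (γ t)) (ε • lieDeriv V ψ (γ t)) s t := by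
  rw [lieDeriv, ← map_smul]
  exact hψ.hasFDerivAt.comp_hasDerivWithinAt t hγ

theorem norm_sub_taylor_le_of_hasDerivWithinAt {u : ℕ → ℝ → G} {T M : ℝ} {n : ℕ} (hT : 0 < T)
    (hu : ∀ i, ∀ t ∈ Icc 0 T, HasDerivWithinAt (u i) (u (i + 1) t) (Icc 0 T) t)
    (hM : ∀ t ∈ Icc 0 T, ‖u n t‖ ≤ M) {t : ℝ} (ht : t ∈ Icc 0 T) :
    ‖u 0 t - ∑ i ∈ Finset.range n, (t ^ i / i !) • u i 0‖ ≤ M * t ^ n := by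
  have hiter (i : ℕ) : EqOn (iteratedDerivWithin i (u 0) (Icc 0 T)) (u i) (Icc 0 T) := by
    induction i with
    | zero => exact fun τ _ => by rw [iteratedDerivWithin_zero]
    | succ i ih =>
      intro τ hτ
      rw [iteratedDerivWithin_succ, derivWithin_congr ih (ih hτ),
        (hu i τ hτ).derivWithin (uniqueDiffOn_Icc hT τ hτ)]
  cases n with
  | zero => simpa using hM t ht
  | succ n =>
    have hsmooth : ContDiffOn ℝ (n + 1 : ℕ) (u 0) (Icc 0 T) :=
      contDiffOn_of_differentiableOn_deriv fun i _ τ hτ =>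
        (hu i τ hτ).differentiableWithinAt.congr (hiter i) (hiter i hτ)
    have htaylor := taylor_mean_remainder_bound hT.le (mod_cast hsmooth) ht
      fun τ hτ => (hiter (n + 1) hτ).symm ▸ hM τ hτ
    have hpoly : taylorWithinEval (u 0) n (Icc 0 T) 0 t =
        ∑ i ∈ Finset.range (n + 1), (t ^ i / i !) • u i 0 := by
      rw [taylor_within_apply]
      refine Finset.sum_congr rfl fun i _ => ?_
      rw [hiter i ⟨le_rfl, hT.le⟩, sub_zero, div_eq_inv_mul]
    rw [hpoly, sub_zero] at htaylor
    have hM0 : 0 ≤ M := (norm_nonneg _).trans (hM t ht)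
    exact htaylor.trans (div_le_self (mul_nonneg hM0 (pow_nonneg ht.1 _))
      (mod_cast Nat.one_le_iff_ne_zero.2 n.factorial_ne_zero))

variable {ι : Type*} {l : Filter ι} {ε : ι → ℝ} {γ : ι → ℝ → X} {z₀ : X} {T : ℝ}

theorem eventually_forall_integralCurve_mem (hV : ContinuousAt V z₀) (hε : Tendsto ε l (𝓝 0))
    (h0 : Tendsto (γ · 0) l (𝓝 z₀))
    (hγ : ∀ᶠ i in l, IsIntegralCurveOn (γ i) (fun _ => ε i • V) (Icc 0 T)) {W : Set X}
    (hW : W ∈ 𝓝 z₀) : ∀ᶠ i in l, ∀ t ∈ Icc 0 T, γ i t ∈ W := by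
  have hVM : ∀ᶠ z in 𝓝 z₀, ‖V z‖ < ‖V z₀‖ + 1 :=
    hV.norm.eventually_lt continuousAt_const (lt_add_one _)
  obtain ⟨r, hr, hball⟩ := Metric.eventually_nhds_iff_ball.1 (hVM.and hW)
  set β := r / (2 * (|T| + 1))
  have hβ : 0 < β := by positivity
  have hβT (t : ℝ) (ht : t ∈ Icc 0 T) : β * t < r / 2 := by
    have htT : t < |T| + 1 := by linarith [ht.2, le_abs_self T]
    calc β * t < β * (|T| + 1) := by gcongr
      _ = r / 2 := by simp only [β]; field_simp
  have hspeed : ∀ᶠ i in l, |ε i| * (‖V z₀‖ + 1) < β :=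
    (hε.abs.mul_const _).eventually_lt_const (by simpa using hβ)
  filter_upwards [hγ, hspeed, h0.eventually (Metric.ball_mem_nhds z₀ (half_pos hr))]
    with i hi hεi h0i
  have hmem (t : ℝ) (ht : t ∈ Icc 0 T) (hle : ‖γ i t - γ i 0‖ ≤ β * t) :
      γ i t ∈ Metric.ball z₀ r := by
    rw [← dist_eq_norm] at hle
    rw [Metric.mem_ball]
    linarith [dist_triangle (γ i t) (γ i 0) z₀, hβT t ht]
  have hle := image_norm_le_of_norm_deriv_right_lt_deriv_boundary' (a := 0) (b := T)
    (f := fun t => γ i t - γ i 0) (B := fun t => β * t) (B' := fun _ => β)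
    (hi.continuousOn.sub continuousOn_const)
    (fun t ht => ((hi t (Ico_subset_Icc_self ht)).mono_of_mem_nhdsWithin
      (Icc_mem_nhdsGE_of_mem ht)).sub_const _)
    (by simp) (by fun_prop)
    (fun t _ => by simpa using ((hasDerivAt_id t).const_mul β).hasDerivWithinAt)
    (fun t ht heq => by
      have hlt := (hball _ (hmem t (Ico_subset_Icc_self ht) heq.le)).1
      simp only [Pi.smul_apply, norm_smul, Real.norm_eq_abs]
      exact lt_of_le_of_lt (by gcongr) hεi)
  exact fun t ht => (hball _ (hmem t ht (hle ht))).2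

theorem isBigO_integralCurve_sub_sum_lieDeriv [CompleteSpace X] [CompleteSpace G]
    (hV : AnalyticAt ℝ V z₀) (hψ : AnalyticAt ℝ ψ z₀) (hε : Tendsto ε l (𝓝 0))
    (h0 : Tendsto (γ · 0) l (𝓝 z₀))
    (hγ : ∀ᶠ i in l, IsIntegralCurveOn (γ i) (fun _ => ε i • V) (Icc 0 T)) (n : ℕ) (hT : 0 < T)
    {t : ℝ} (ht : t ∈ Icc 0 T) :
    (fun i => ψ (γ i t) -
      ∑ k ∈ Finset.range n, ((t * ε i) ^ k / k !) • (lieDeriv V)^[k] ψ (γ i 0)) =O[l]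
        fun i => ε i ^ n := by
  set M := ‖(lieDeriv V)^[n] ψ z₀‖ + 1
  have hbound : ∀ᶠ z in 𝓝 z₀, ‖(lieDeriv V)^[n] ψ z‖ < M :=
    (analyticAt_lieDeriv_iterate hV hψ n).continuousAt.norm.eventually_lt continuousAt_const
      (lt_add_one _)
  refine IsBigO.of_bound (M * t ^ n) ?_
  filter_upwards [hγ, eventually_forall_integralCurve_mem hV.continuousAt hε h0 hγ
    (hV.eventually_analyticAt.and (hψ.eventually_analyticAt.and hbound))] with i hi hmem
  have htaylor := norm_sub_taylor_le_of_hasDerivWithinAt (n := n) (M := |ε i| ^ n * M)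
    (u := fun k t => ε i ^ k • (lieDeriv V)^[k] ψ (γ i t)) hT
    (fun k t ht => by
      have hd := hasDerivWithinAt_comp_of_smul_field (analyticAt_lieDeriv_iterate (hmem t ht).1
        (hmem t ht).2.1 k).differentiableAt (hi t ht)
      rw [Function.iterate_succ_apply', pow_succ, mul_smul]
      exact hd.const_smul (ε i ^ k))
    (fun t ht => by
      rw [norm_smul, norm_pow, Real.norm_eq_abs]
      have := (hmem t ht).2.2.le
      gcongr) ht
  simp only [pow_zero, one_smul, Function.iterate_zero, id, smul_smul, div_mul_eq_mul_div,
    ← mul_pow] at htaylor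
  rw [norm_pow, Real.norm_eq_abs]
  exact htaylor.trans_eq (by ring)

theorem lieDeriv_add_smul {ψ₁ ψ₂ : X → G} {c : X → ℝ} (hψ₁ : DifferentiableAt ℝ ψ₁ z)
    (hψ₂ : DifferentiableAt ℝ ψ₂ z) (hc : DifferentiableAt ℝ c z) :
    lieDeriv V (fun y => ψ₁ y + c y • ψ₂ y) z =
      lieDeriv V ψ₁ z + c z • lieDeriv V ψ₂ z + lieDeriv V c z • ψ₂ z := by
  simp only [lieDeriv]
  rw [fderiv_fun_add hψ₁ (hc.fun_smul hψ₂), fderiv_fun_smul hc hψ₂]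
  simp [add_assoc]

theorem exists_lieDeriv_iterate_eq_add_smul [CompleteSpace G] {Ω : Set X} (hΩ : IsOpen Ω)
    {V' W : X → X} {c : X → ℝ} (hV : AnalyticOnNhd ℝ V Ω) (hV' : AnalyticOnNhd ℝ V' Ω)
    (hW : AnalyticOnNhd ℝ W Ω) (hψ : AnalyticOnNhd ℝ ψ Ω) (hc : DifferentiableOn ℝ c Ω)
    (hcV' : ∀ z ∈ Ω, lieDeriv V' c z = 0) (hVW : ∀ z ∈ Ω, V' z = V z + c z • W z) (k : ℕ) :
    ∃ R : X → G, AnalyticOnNhd ℝ R Ω ∧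
      ∀ z ∈ Ω, (lieDeriv V')^[k] ψ z = (lieDeriv V)^[k] ψ z + c z • R z := by
  induction k with
  | zero => exact ⟨0, analyticOnNhd_const, by simp⟩
  | succ k ih =>
    obtain ⟨R, hR, hRk⟩ := ih
    have hA : AnalyticOnNhd ℝ ((lieDeriv V)^[k] ψ) Ω := fun z hz =>
      analyticAt_lieDeriv_iterate (hV z hz) (hψ z hz) k
    refine ⟨fun z => lieDeriv W ((lieDeriv V)^[k] ψ) z + lieDeriv V' R z, fun z hz =>
      (analyticAt_lieDeriv (hW z hz) (hA z hz)).add (analyticAt_lieDeriv (hV' z hz) (hR z hz)),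
      fun z hz => ?_⟩
    have hRz : (lieDeriv V')^[k] ψ =ᶠ[𝓝 z] fun y => (lieDeriv V)^[k] ψ y + c y • R y :=
      eventually_of_mem (hΩ.mem_nhds hz) hRk
    calc (lieDeriv V')^[k + 1] ψ z
        = lieDeriv V' (fun y => (lieDeriv V)^[k] ψ y + c y • R y) z := by
          rw [Function.iterate_succ_apply', lieDeriv, lieDeriv, hRz.fderiv_eq]
      _ = lieDeriv V' ((lieDeriv V)^[k] ψ) z + c z • lieDeriv V' R z := by
          rw [lieDeriv_add_smul (hA z hz).differentiableAt (hR z hz).differentiableAt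
            (hc.differentiableAt (hΩ.mem_nhds hz)), hcV' z hz, zero_smul, add_zero]
      _ = _ := by
          rw [Function.iterate_succ_apply', smul_add, ← add_assoc]
          simp only [lieDeriv, hVW z hz, map_add, map_smul]

end LieDeriv

theorem exists_pos_forall_abs_le_of_eventually {P : ℝ → Prop} (h : ∀ᶠ μ in 𝓝 (0 : ℝ), P μ) :
    ∃ r > 0, ∀ μ : ℝ, |μ| ≤ r → P μ := by
  simpa using Metric.nhds_basis_closedBall.eventually_iff.1 h

theorem exists_pos_eventually_norm_le {G : Type*} [NormedAddCommGroup G] {v : ℝ → G} {n : ℕ}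
    (h : v =O[𝓝 0] fun μ => μ ^ n) : ∃ C > 0, ∀ᶠ μ in 𝓝 0, ‖v μ‖ ≤ C * |μ| ^ n := by
  obtain ⟨C, hC, hv⟩ := h.exists_pos
  exact ⟨C, hC, by simpa using hv.bound⟩

section Order

variable {G : Type*} [NormedAddCommGroup G] [NormedSpace ℝ G]

theorem isBigO_pow_of_le {m n : ℕ} (h : m ≤ n) :
    (fun μ : ℝ => μ ^ n) =O[𝓝 0] fun μ => μ ^ m := by
  rcases h.eq_or_lt with rfl | h
  · exact isBigO_refl _ _
  · exact (isLittleO_pow_pow h).isBigO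

theorem isBigO_pow_smul {B : ℝ → G} (hB : ContinuousAt B 0) (n : ℕ) :
    (fun μ : ℝ => μ ^ n • B μ) =O[𝓝 0] fun μ => μ ^ n := by
  simpa using (isBigO_refl (fun μ : ℝ => μ ^ n) (𝓝 0)).smul (hB.tendsto.isBigO_one ℝ)

theorem eq_zero_of_pow_smul_isBigO {n : ℕ} {v : G}
    (h : (fun μ : ℝ => μ ^ n • v) =O[𝓝 0] fun μ => μ ^ (n + 1)) : v = 0 := by
  have hdiv := (isBigO_refl (fun μ : ℝ => (μ ^ n)⁻¹) (𝓝[≠] 0)).smul (h.mono nhdsWithin_le_nhds)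
  have hv : (fun _ : ℝ => v) =O[𝓝[≠] 0] fun μ => μ := by
    refine hdiv.congr' ?_ ?_ <;> filter_upwards [self_mem_nhdsWithin] with μ hμ
    · exact inv_smul_smul₀ (pow_ne_zero n hμ) v
    · rw [smul_eq_mul, pow_succ, inv_mul_cancel_left₀ (pow_ne_zero n hμ)]
  exact tendsto_nhds_unique tendsto_const_nhds
    (hv.trans_tendsto (tendsto_id.mono_left nhdsWithin_le_nhds))

theorem eq_zero_of_sum_pow_smul_isBigO {n : ℕ} {c : ℕ → G}
    (h : (fun μ : ℝ => ∑ i ∈ Finset.range n, μ ^ i • c i) =O[𝓝 0] fun μ => μ ^ n) :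
    ∀ i < n, c i = 0 := by
  intro i
  induction i using Nat.strong_induction_on with
  | _ i ih =>
    intro hi
    have hrest : (fun μ : ℝ => ∑ j ∈ (Finset.range n).erase i, μ ^ j • c j) =O[𝓝 0]
        fun μ => μ ^ (i + 1) := by
      refine IsBigO.fun_sum fun j hj => ?_
      obtain ⟨hji, hjn⟩ := Finset.mem_erase.1 hj
      rcases hji.lt_or_gt with hlt | hgt
      · simpa [ih j hlt (Finset.mem_range.1 hjn)] using isBigO_zero _ _
      · exact (isBigO_pow_smul continuousAt_const j).trans (isBigO_pow_of_le hgt)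
    refine eq_zero_of_pow_smul_isBigO (n := i) ?_
    refine ((h.trans (isBigO_pow_of_le hi)).sub hrest).congr_left fun μ => ?_
    rw [← Finset.add_sum_erase _ _ (Finset.mem_range.2 hi), add_sub_cancel_right]

end Order

section TaylorCoeff

variable {E G : Type*} [NormedAddCommGroup E] [NormedSpace ℝ E] [NormedAddCommGroup G]
  [NormedSpace ℝ G] [CompleteSpace G] {F : E × ℝ → G} {x : E}

/-- The `n`-th Taylor coefficient at `μ = 0` of `μ ↦ F (x, μ)`, written with the derivative along
the constant field `∂/∂μ`. -/
noncomputable def taylorCoeff (F : E × ℝ → G) (n : ℕ) (x : E) : G :=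
  (n ! : ℝ)⁻¹ • (lieDeriv fun _ => (0, 1))^[n] F (x, 0)

theorem analyticAt_taylorCoeff (hF : AnalyticAt ℝ F (x, 0)) (n : ℕ) :
    AnalyticAt ℝ (taylorCoeff F n) x := by
  have hd := analyticAt_lieDeriv_iterate (V := fun _ => (0, 1)) analyticAt_const hF n
  exact (hd.comp (f := fun y : E => (y, (0 : ℝ)))
    (analyticAt_id.prod analyticAt_const)).const_smul (c := (n ! : ℝ)⁻¹)

theorem isBigO_sub_sum_taylorCoeff [CompleteSpace E] (hF : AnalyticAt ℝ F (x, 0)) (n : ℕ) :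
    (fun z : E × ℝ => F z - ∑ i ∈ Finset.range n, z.2 ^ i • taylorCoeff F i z.1)
      =O[𝓝 (x, 0)] fun z => z.2 ^ n := by
  have hcurve (z : E × ℝ) : IsIntegralCurveOn (fun t => (z.1, t * z.2))
      (fun _ => z.2 • fun _ => ((0 : E), (1 : ℝ))) (Icc 0 1) := fun t _ => by
    simpa using (hasDerivWithinAt_const t _ z.1).prodMk
      ((hasDerivWithinAt_id t (Icc 0 1)).mul_const z.2)
  have h0 : Tendsto (fun z : E × ℝ => (z.1, (0 : ℝ) * z.2)) (𝓝 (x, 0)) (𝓝 (x, 0)) := by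
    simpa using (continuous_fst.prodMk continuous_const).tendsto (x, (0 : ℝ))
  have htaylor := isBigO_integralCurve_sub_sum_lieDeriv analyticAt_const hF
    (continuous_snd.tendsto (x, (0 : ℝ))) h0 (.of_forall hcurve) n one_pos
    (right_mem_Icc.2 zero_le_one)
  simpa only [one_mul, zero_mul, taylorCoeff, smul_smul, div_eq_mul_inv] using htaylor

theorem taylorCoeff_eq_zero_of_isBigO [CompleteSpace E] (hF : AnalyticAt ℝ F (x, 0)) {n : ℕ}
    (h : (fun μ => F (x, μ)) =O[𝓝 0] fun μ => μ ^ n) : ∀ i < n, taylorCoeff F i x = 0 := by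
  have htaylor := (isBigO_sub_sum_taylorCoeff hF n).comp_tendsto
    ((Continuous.prodMk_right x).tendsto 0)
  exact eq_zero_of_sum_pow_smul_isBigO ((h.sub htaylor).congr_left fun μ => sub_sub_cancel _ _)

theorem isBigO_sub_pow_smul_taylorCoeff [CompleteSpace E] (hF : AnalyticAt ℝ F (x, 0)) {n : ℕ}
    (h : (fun μ => F (x, μ)) =O[𝓝 0] fun μ => μ ^ n) :
    (fun μ => F (x, μ) - μ ^ n • taylorCoeff F n x) =O[𝓝 0] fun μ => μ ^ (n + 1) := by
  have hzero := taylorCoeff_eq_zero_of_isBigO hF h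
  refine ((isBigO_sub_sum_taylorCoeff hF (n + 1)).comp_tendsto
    ((Continuous.prodMk_right x).tendsto 0)).congr_left fun μ => ?_
  rw [Function.comp_apply, Finset.sum_range_succ, Finset.sum_eq_zero, zero_add]
  exact fun i hi => by rw [hzero i (Finset.mem_range.1 hi), smul_zero]

-- The remainder in Taylor's formula is uniform in `x`, so only the vanishing of the coefficients
-- has to be checked, and this is a pointwise condition.
theorem isBigO_nhds_of_forall_isBigO [CompleteSpace E] {U : Set E} (hU : IsOpen U)
    (hF : ∀ y ∈ U, AnalyticAt ℝ F (y, 0)) {n : ℕ}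
    (h : ∀ y ∈ U, (fun μ => F (y, μ)) =O[𝓝 0] fun μ => μ ^ n) (hx : x ∈ U) :
    F =O[𝓝 (x, 0)] fun z => z.2 ^ n := by
  refine (isBigO_sub_sum_taylorCoeff (hF x hx) n).congr' ?_ EventuallyEq.rfl
  filter_upwards [continuous_fst.continuousAt.preimage_mem_nhds (hU.mem_nhds hx)] with z hz
  rw [Finset.sum_eq_zero, sub_zero]
  intro i hi
  rw [taylorCoeff_eq_zero_of_isBigO (hF _ hz) (h _ hz) i (Finset.mem_range.1 hi), smul_zero]

end TaylorCoeff

section ParametricField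

variable {E : Type*} [NormedAddCommGroup E] [NormedSpace ℝ E] {H : E × ℝ → E} {x : E} {T : ℝ}

/-- The vector field `H(·, μ)`, viewed as a vector field on `E × ℝ` that does not move the
parameter `μ`. -/
def liftField (H : E × ℝ → E) (z : E × ℝ) : E × ℝ :=
  (H z, 0)

theorem analyticAt_liftField {z : E × ℝ} (hH : AnalyticAt ℝ H z) :
    AnalyticAt ℝ (liftField H) z :=
  hH.prod analyticAt_const

theorem lieDeriv_liftField_fst : lieDeriv (liftField H) Prod.fst = H := by
  ext z
  simp [lieDeriv, liftField, fderiv_fst]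

theorem lieDeriv_liftField_snd_pow (p : ℕ) (z : E × ℝ) :
    lieDeriv (liftField H) (fun z => z.2 ^ p) z = 0 := by
  rw [lieDeriv, fderiv_fun_pow _ differentiableAt_snd, fderiv_snd]
  simp [liftField]

/-- The Lie series `exp(tμH)` of the field `μ H(·, μ)`, applied to the identity and truncated after
`n` terms: the formal expansion in `μ` of its flow at time `t`. -/
noncomputable def lieSeries (H : E × ℝ → E) (n : ℕ) (t : ℝ) (z : E × ℝ) : E :=
  ∑ i ∈ Finset.range n, ((t * z.2) ^ i / i !) • (lieDeriv (liftField H))^[i] Prod.fst z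

theorem analyticAt_lieSeries [CompleteSpace E] {z : E × ℝ} (hH : AnalyticAt ℝ H z) (n : ℕ)
    (t : ℝ) : AnalyticAt ℝ (lieSeries H n t) z :=
  Finset.analyticAt_fun_sum _ fun i _ =>
    ((analyticAt_const.mul analyticAt_snd).pow i).div_const.smul
      (analyticAt_lieDeriv_iterate (analyticAt_liftField hH) analyticAt_fst i)

theorem isBigO_lieSeries_succ_sub [CompleteSpace E] (hH : AnalyticAt ℝ H (x, 0)) (n : ℕ) (t : ℝ) :
    (fun μ => lieSeries H (n + 1) t (x, μ) - lieSeries H n t (x, μ)) =O[𝓝 0] fun μ => μ ^ n := by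
  have hlast : ContinuousAt
      (fun μ : ℝ => (t ^ n / n !) • (lieDeriv (liftField H))^[n] Prod.fst (x, μ)) 0 :=
    ((analyticAt_lieDeriv_iterate (analyticAt_liftField hH) analyticAt_fst n).continuousAt.comp
      (Continuous.prodMk_right x).continuousAt).const_smul _
  refine (isBigO_pow_smul hlast n).congr_left fun μ => ?_
  rw [lieSeries, Finset.sum_range_succ, ← lieSeries, add_sub_cancel_left, mul_pow, smul_smul]
  congr 1
  ring

theorem newtonDeriv_lieSeries {m : ℕ} (hm : 1 ≤ m) (z : E × ℝ) :
    newtonDeriv m (fun j => lieSeries H (m + 1) j z) = z.2 • H z := by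
  have hpoly (j : ℕ) : lieSeries H (m + 1) j z = ∑ i ∈ Finset.range (m + 1),
      (j : ℝ) ^ i • (z.2 ^ i / i !) • (lieDeriv (liftField H))^[i] Prod.fst z :=
    Finset.sum_congr rfl fun i _ => by rw [smul_smul, mul_pow, mul_div_assoc]
  simp only [hpoly]
  rw [newtonDeriv_sum_pow_smul hm]
  simp [lieDeriv_liftField_fst]

theorem isBigO_lieSeries_sub_sub [CompleteSpace E] {Ω : Set (E × ℝ)} (hΩ : IsOpen Ω)
    {H' w : E × ℝ → E} {p : ℕ} (hH : AnalyticOnNhd ℝ H Ω) (hH' : AnalyticOnNhd ℝ H' Ω)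
    (hw : AnalyticOnNhd ℝ w Ω) (hHw : ∀ z ∈ Ω, H' z = H z + z.2 ^ p • w z) (hx : (x, 0) ∈ Ω)
    (n : ℕ) :
    (fun μ => lieSeries H' (n + 2) 1 (x, μ) - lieSeries H (n + 2) 1 (x, μ) -
      μ ^ (p + 1) • w (x, μ)) =O[𝓝 0] fun μ => μ ^ (p + 2) := by
  have hlift (z : E × ℝ) (hz : z ∈ Ω) :
      liftField H' z = liftField H z + z.2 ^ p • liftField w z := by
    simp [liftField, hHw z hz]
  choose R hR hRi using exists_lieDeriv_iterate_eq_add_smul (ψ := Prod.fst) hΩ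
    (fun z hz => analyticAt_liftField (hH z hz)) (fun z hz => analyticAt_liftField (hH' z hz))
    (fun z hz => analyticAt_liftField (hw z hz)) analyticOnNhd_fst
    (by fun_prop) (fun z _ => lieDeriv_liftField_snd_pow p z) hlift
  have hcurve : ContinuousAt (fun μ : ℝ => (x, μ)) 0 := (Continuous.prodMk_right x).continuousAt
  have hterm (i : ℕ) : (fun μ : ℝ => μ ^ (p + 2) • (μ ^ i / (i + 2)!) • R (i + 2) (x, μ))
      =O[𝓝 0] fun μ => μ ^ (p + 2) :=
    isBigO_pow_smul (((continuousAt_id.pow i).div_const _).smul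
      ((hR (i + 2) (x, 0) hx).continuousAt.comp (f := fun μ : ℝ => (x, μ)) hcurve)) (p + 2)
  refine (IsBigO.fun_sum fun i (_ : i ∈ Finset.range n) => hterm i).congr' ?_ EventuallyEq.rfl
  filter_upwards [hcurve.preimage_mem_nhds (hΩ.mem_nhds hx)] with μ hμ
  have hdiff (i : ℕ) : (lieDeriv (liftField H'))^[i] Prod.fst (x, μ) -
      (lieDeriv (liftField H))^[i] Prod.fst (x, μ) = μ ^ p • R i (x, μ) := by
    rw [hRi i _ hμ, add_sub_cancel_left]
  have hone : (lieDeriv (liftField H'))^[1] Prod.fst (x, μ) -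
      (lieDeriv (liftField H))^[1] Prod.fst (x, μ) = μ ^ p • w (x, μ) := by
    simp only [Function.iterate_one, lieDeriv_liftField_fst, hHw _ hμ, add_sub_cancel_left]
  rw [lieSeries, lieSeries, ← Finset.sum_sub_distrib]
  simp only [← smul_sub, Finset.sum_range_succ']
  rw [zero_add, hone, Function.iterate_zero, Function.iterate_zero, sub_self, smul_zero, add_zero,
    smul_smul, one_mul, pow_one, Nat.factorial_one, Nat.cast_one, div_one, ← pow_succ',
    add_sub_cancel_right]
  refine Finset.sum_congr rfl fun i _ => ?_
  rw [add_assoc, hdiff, smul_smul, smul_smul]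
  ring_nf

/-- The curves `γ μ` solve `γ' = μ H(γ, μ)` on `[0, T]`, for all sufficiently small `μ`. -/
def IsTrajectoryFamily (H : E × ℝ → E) (T : ℝ) (γ : ℝ → ℝ → E) : Prop :=
  ∀ᶠ μ in 𝓝 0, ∀ t ∈ Icc 0 T, HasDerivAt (γ μ) (μ • H (γ μ t, μ)) t

namespace IsTrajectoryFamily

variable {γ : ℝ → ℝ → E}

theorem isIntegralCurveOn (hγ : IsTrajectoryFamily H T γ) :
    ∀ᶠ μ in 𝓝 0, IsIntegralCurveOn (fun t => (γ μ t, μ)) (fun _ => μ • liftField H)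
      (Icc 0 T) := by
  filter_upwards [hγ] with μ hμ t ht
  simpa [liftField] using ((hμ t ht).prodMk (hasDerivAt_const t μ)).hasDerivWithinAt

theorem comp_const_add (hγ : IsTrajectoryFamily H T γ) {s T' : ℝ} (hs : 0 ≤ s) (hT' : s + T' ≤ T) :
    IsTrajectoryFamily H T' fun μ t => γ μ (s + t) := by
  filter_upwards [hγ] with μ hμ t ht
  exact (hμ (s + t) ⟨by linarith [ht.1], by linarith [ht.2]⟩).comp_const_add s t

theorem eventually_mem (hγ : IsTrajectoryFamily H T γ) (hH : ContinuousAt H (x, 0))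
    (h0 : Tendsto (γ · 0) (𝓝 0) (𝓝 x)) {W : Set E} (hW : W ∈ 𝓝 x) :
    ∀ᶠ μ in 𝓝 0, ∀ t ∈ Icc 0 T, γ μ t ∈ W :=
  eventually_forall_integralCurve_mem (V := liftField H) (ε := id) (γ := fun μ t => (γ μ t, μ))
    (hH.prodMk continuousAt_const) tendsto_id (h0.prodMk_nhds tendsto_id) hγ.isIntegralCurveOn
    (continuous_fst.continuousAt.preimage_mem_nhds hW)

theorem tendsto (hγ : IsTrajectoryFamily H T γ) (hH : ContinuousAt H (x, 0))
    (h0 : Tendsto (γ · 0) (𝓝 0) (𝓝 x)) {t : ℝ} (ht : t ∈ Icc 0 T) :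
    Tendsto (γ · t) (𝓝 0) (𝓝 x) := fun _ hW =>
  (hγ.eventually_mem hH h0 hW).mono fun _ hμ => hμ t ht

theorem isBigO_sub_lieSeries [CompleteSpace E] (hγ : IsTrajectoryFamily H T γ)
    (hH : AnalyticAt ℝ H (x, 0)) (h0 : Tendsto (γ · 0) (𝓝 0) (𝓝 x)) (n : ℕ) (hT : 0 < T) {t : ℝ}
    (ht : t ∈ Icc 0 T) :
    (fun μ => γ μ t - lieSeries H n t (γ μ 0, μ)) =O[𝓝 0] fun μ => μ ^ n :=
  isBigO_integralCurve_sub_sum_lieDeriv (ε := id) (γ := fun μ t => (γ μ t, μ))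
    (analyticAt_liftField hH) analyticAt_fst tendsto_id (h0.prodMk_nhds tendsto_id)
    hγ.isIntegralCurveOn n hT ht

end IsTrajectoryFamily

theorem snd_eq_of_hasDerivAt_liftField {α : ℝ → E × ℝ} {a b : ℝ}
    (hα : ∀ t ∈ Ioo a b, HasDerivAt α (liftField H (α t)) t) {s t : ℝ} (hs : s ∈ Ioo a b)
    (ht : t ∈ Ioo a b) : (α s).2 = (α t).2 :=
  have hderiv (r : ℝ) (hr : r ∈ Ioo a b) : HasDerivAt (fun r => (α r).2) 0 r := (hα r hr).snd
  isOpen_Ioo.is_const_of_deriv_eq_zero isPreconnected_Ioo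
    (fun r hr => (hderiv r hr).differentiableAt.differentiableWithinAt)
    (fun r hr => (hderiv r hr).deriv) hs ht

-- The trajectories of `μ H` are those of `H` with time rescaled by `μ`.
theorem exists_isTrajectoryFamily [CompleteSpace E] (hH : ContDiffAt ℝ 1 H (x, 0)) (T : ℝ) :
    ∃ γ : ℝ → ℝ → E, (∀ᶠ μ in 𝓝 0, γ μ 0 = x) ∧ IsTrajectoryFamily H T γ := by
  have hlift : ContDiffAt ℝ 1 (liftField H) (x, 0) := hH.prodMk contDiffAt_const
  obtain ⟨r, hr, ε, hε, hα⟩ :=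
    hlift.exists_forall_mem_closedBall_exists_eq_forall_mem_Ioo_hasDerivAt 0
  have hstart : ∀ᶠ μ in 𝓝 (0 : ℝ), (x, μ) ∈ Metric.closedBall (x, (0 : ℝ)) r :=
    (Continuous.prodMk_right x).continuousAt.preimage_mem_nhds (Metric.closedBall_mem_nhds _ hr)
  choose! α hα0 hαderiv using hα
  simp only [zero_sub, zero_add] at hαderiv
  have hsmall : ∀ᶠ μ in 𝓝 (0 : ℝ), |μ| * |T| < ε := by
    have hcont : Continuous fun μ : ℝ => |μ| * |T| := by fun_prop
    exact hcont.continuousAt.eventually_lt continuousAt_const (by simpa using hε)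
  refine ⟨fun μ t => (α (x, μ) (μ * t)).1, ?_, ?_⟩
  · filter_upwards [hstart] with μ hμ
    rw [mul_zero, hα0 _ hμ]
  · filter_upwards [hstart, hsmall] with μ hμ hμT t ht
    have hμt : μ * t ∈ Ioo (-ε) ε := by
      rw [mem_Ioo, ← abs_lt, abs_mul]
      exact (mul_le_mul_of_nonneg_left (abs_le_abs_of_nonneg ht.1 ht.2) (abs_nonneg μ)).trans_lt hμT
    have hparam : (α (x, μ) (μ * t)).2 = μ := by
      rw [snd_eq_of_hasDerivAt_liftField (hαderiv _ hμ) hμt ⟨neg_lt_zero.2 hε, hε⟩, hα0 _ hμ]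
    have hfst : HasDerivAt (fun s => (α (x, μ) s).1) (H (α (x, μ) (μ * t))) (μ * t) :=
      (hαderiv _ hμ _ hμt).fst
    rw [show ((α (x, μ) (μ * t)).1, μ) = α (x, μ) (μ * t) from Prod.ext rfl hparam.symm]
    simpa [Function.comp_def] using hfst.scomp t ((hasDerivAt_id t).const_mul μ)

end ParametricField

section Interpolation

variable {E : Type*} [NormedAddCommGroup E] [NormedSpace ℝ E] {U : Set E} {f : ℝ → E → E}
  {F H : E × ℝ → E} {g : ℕ → E → E} {x : E}

/-- The field `∑ μ^(k-1) g_k`, summed over `1 ≤ k ≤ n`, as a function of `(x, μ)`; the vector field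
`G_n` is `μ` times it. -/
def truncatedField (g : ℕ → E → E) (n : ℕ) (z : E × ℝ) : E :=
  ∑ i ∈ Finset.range n, z.2 ^ i • g (i + 1) z.1

theorem smul_truncatedField (g : ℕ → E → E) (n : ℕ) (x : E) (μ : ℝ) :
    μ • truncatedField g n (x, μ) = ∑ k ∈ Finset.Icc 1 n, μ ^ k • g k x := by
  rw [truncatedField, Finset.smul_sum, Finset.range_eq_Ico, ← Finset.Ico_add_one_right_eq_Icc,
    ← Finset.sum_Ico_add' _ 0 n 1]
  exact Finset.sum_congr rfl fun i _ => by rw [smul_smul, pow_succ']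

theorem analyticAt_truncatedField {z : E × ℝ} (hg : ∀ k, 1 ≤ k → AnalyticAt ℝ (g k) z.1) (n : ℕ) :
    AnalyticAt ℝ (truncatedField g n) z :=
  Finset.analyticAt_fun_sum _ fun i _ => (analyticAt_snd.pow i).smul
    ((hg (i + 1) i.succ_pos).fun_comp analyticAt_fst)

theorem truncatedField_succ_eq_add_of_forall_lt {g' : ℕ → E → E} {p : ℕ} {z : E × ℝ}
    (h : ∀ i < p, g' (i + 1) z.1 = g (i + 1) z.1) :
    truncatedField g' (p + 1) z =
      truncatedField g (p + 1) z + z.2 ^ p • (g' (p + 1) z.1 - g (p + 1) z.1) := by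
  have hlow : truncatedField g' p z = truncatedField g p z :=
    Finset.sum_congr rfl fun i hi => by rw [h i (Finset.mem_range.1 hi)]
  simp only [truncatedField] at hlow ⊢
  rw [Finset.sum_range_succ, Finset.sum_range_succ, hlow]
  module

/-- The coefficient of `μ^n` in the Taylor series of the error `F - exp(μH)`. -/
noncomputable def defectCoeff (F H : E × ℝ → E) (n : ℕ) : E → E :=
  taylorCoeff (fun z => F z - lieSeries H (n + 1) 1 z) n

theorem analyticAt_defectCoeff [CompleteSpace E] (hF : AnalyticAt ℝ F (x, 0))
    (hH : AnalyticAt ℝ H (x, 0)) (n : ℕ) : AnalyticAt ℝ (defectCoeff F H n) x :=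
  analyticAt_taylorCoeff (hF.fun_sub (analyticAt_lieSeries hH _ _)) n

/-- The polynomial in `μ` of degree less than `n` whose product with `μ` has a flow with time-one
map `F(·, μ) + O(μ^(n+1))`: each leading error is corrected by the next coefficient. -/
noncomputable def interpolatingField (F : E × ℝ → E) : ℕ → E × ℝ → E
  | 0 => 0
  | n + 1 => fun z =>
      interpolatingField F n z + z.2 ^ n • defectCoeff F (interpolatingField F n) (n + 1) z.1

/-- The coefficient `g_k`, for `k ≥ 1`, of the formal vector field interpolating `F`. -/
noncomputable def interpolatingCoeff (F : E × ℝ → E) (k : ℕ) : E → E :=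
  defectCoeff F (interpolatingField F (k - 1)) k

theorem truncatedField_interpolatingCoeff (F : E × ℝ → E) (n : ℕ) :
    truncatedField (interpolatingCoeff F) n = interpolatingField F n := by
  induction n with
  | zero => rfl
  | succ n ih =>
    ext z
    rw [truncatedField, Finset.sum_range_succ, ← truncatedField, ih, interpolatingField,
      interpolatingCoeff, Nat.add_sub_cancel]

variable [CompleteSpace E]

theorem analyticAt_interpolatingField {z : E × ℝ} (hF : AnalyticAt ℝ F (z.1, 0)) (n : ℕ) :
    AnalyticAt ℝ (interpolatingField F n) z := by
  induction n generalizing z with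
  | zero => exact analyticAt_const
  | succ n ih =>
    exact (ih hF).fun_add ((analyticAt_snd.pow n).smul
      ((analyticAt_defectCoeff hF (ih (z := (z.1, 0)) hF) (n + 1)).fun_comp analyticAt_fst))

theorem analyticAt_interpolatingCoeff (hF : AnalyticAt ℝ F (x, 0)) (k : ℕ) :
    AnalyticAt ℝ (interpolatingCoeff F k) x :=
  analyticAt_defectCoeff hF (analyticAt_interpolatingField (z := (x, 0)) hF (k - 1)) k

theorem isBigO_sub_lieSeries_interpolatingField (hU : IsOpen U)
    (hF : ∀ y ∈ U, AnalyticAt ℝ F (y, 0)) (hF0 : ∀ y ∈ U, F (y, 0) = y) (n : ℕ) (hx : x ∈ U) :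
    (fun μ => F (x, μ) - lieSeries (interpolatingField F n) (n + 1) 1 (x, μ)) =O[𝓝 0]
      fun μ => μ ^ (n + 1) := by
  induction n with
  | zero =>
    have hdiff : DifferentiableAt ℝ (fun μ : ℝ => F (x, μ)) 0 :=
      (hF x hx).differentiableAt.comp 0 (by fun_prop)
    simpa [lieSeries, hF0 x hx] using hdiff.isBigO_sub
  | succ n ih =>
    have hH (y : E) (hy : y ∈ U) : AnalyticAt ℝ (interpolatingField F n) (y, 0) :=
      analyticAt_interpolatingField (hF y hy) n
    have hdefect : (fun μ => F (x, μ) - lieSeries (interpolatingField F n) (n + 2) 1 (x, μ))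
        =O[𝓝 0] fun μ => μ ^ (n + 1) :=
      (ih.sub (isBigO_lieSeries_succ_sub (hH x hx) (n + 1) 1)).congr_left fun μ => by abel
    have hleading := isBigO_sub_pow_smul_taylorCoeff
      ((hF x hx).fun_sub (analyticAt_lieSeries (hH x hx) (n + 2) 1)) hdefect
    have hcorrection := isBigO_lieSeries_sub_sub (p := n) (x := x) (hU.prod isOpen_univ)
      (w := fun z => defectCoeff F (interpolatingField F n) (n + 1) z.1)
      (fun z hz => analyticAt_interpolatingField (hF z.1 hz.1) n)
      (fun z hz => analyticAt_interpolatingField (hF z.1 hz.1) (n + 1))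
      (fun z hz => (analyticAt_defectCoeff (hF z.1 hz.1) (hH z.1 hz.1) (n + 1)).fun_comp
        analyticAt_fst) (fun _ _ => rfl) ⟨hx, mem_univ 0⟩ n
    refine (hleading.sub hcorrection).congr_left fun μ => ?_
    rw [defectCoeff]
    abel

theorem eqOn_of_isBigO_sub_lieSeries_truncatedField (hU : IsOpen U) {g' : ℕ → E → E}
    (hg : ∀ k, 1 ≤ k → AnalyticOnNhd ℝ (g k) U) (hg' : ∀ k, 1 ≤ k → AnalyticOnNhd ℝ (g' k) U)
    (h : ∀ m, ∀ y ∈ U, (fun μ => F (y, μ) - lieSeries (truncatedField g m) (m + 1) 1 (y, μ))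
      =O[𝓝 0] fun μ => μ ^ (m + 1))
    (h' : ∀ m, ∀ y ∈ U, (fun μ => F (y, μ) - lieSeries (truncatedField g' m) (m + 1) 1 (y, μ))
      =O[𝓝 0] fun μ => μ ^ (m + 1)) (p : ℕ) :
    EqOn (g' (p + 1)) (g (p + 1)) U := by
  induction p using Nat.strong_induction_on with
  | _ p ih =>
    intro x hx
    have hcorrection := isBigO_lieSeries_sub_sub (p := p) (x := x) (hU.prod isOpen_univ)
      (w := fun z => g' (p + 1) z.1 - g (p + 1) z.1)
      (fun z hz => analyticAt_truncatedField (fun k hk => hg k hk z.1 hz.1) (p + 1))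
      (fun z hz => analyticAt_truncatedField (fun k hk => hg' k hk z.1 hz.1) (p + 1))
      (fun z hz => ((hg' _ p.succ_pos z.1 hz.1).fun_sub (hg _ p.succ_pos z.1 hz.1)).fun_comp
        analyticAt_fst)
      (fun z hz => truncatedField_succ_eq_add_of_forall_lt fun i hi => ih i hi hz.1)
      ⟨hx, mem_univ 0⟩ p
    have hsmall := (((h (p + 1) x hx).sub (h' (p + 1) x hx)).sub hcorrection).congr_left
      (f₂ := fun μ : ℝ => μ ^ (p + 1) • (g' (p + 1) x - g (p + 1) x)) fun μ => by abel
    exact sub_eq_zero.1 (eq_zero_of_pow_smul_isBigO hsmall)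

end Interpolation

theorem tendsto_iterate {X Λ : Type*} [TopologicalSpace X] [TopologicalSpace Λ] {f : Λ → X → X}
    {x : X} {a : Λ} (hf : ContinuousAt (fun z : X × Λ => f z.2 z.1) (x, a)) (hfa : f a x = x)
    (j : ℕ) : Tendsto (fun μ => (f μ)^[j] x) (𝓝 a) (𝓝 x) := by
  induction j with
  | zero => exact tendsto_const_nhds
  | succ j ih =>
    simp only [Function.iterate_succ_apply']
    simpa only [hfa, Function.comp_def, id] using hf.tendsto.comp (ih.prodMk_nhds tendsto_id)

section FormalFlow

variable {E : Type*} [NormedAddCommGroup E] [NormedSpace ℝ E] {U : Set E} {f : ℝ → E → E}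
  {H : E × ℝ → E} {g : ℕ → E → E} {γ : ℝ → ℝ → E} {x : E} {m n : ℕ}

/-- `FormalInterpolation` with an arbitrary normed space in place of `ℝ^s`. -/
def IsFormalInterpolation (U : Set E) (f : ℝ → E → E) (g : ℕ → E → E) : Prop :=
  ∀ m : ℕ, ∀ x ∈ U, ∃ C > (0 : ℝ), ∃ μ' > (0 : ℝ), ∀ μ : ℝ, |μ| ≤ μ' →
    ∃ γ : ℝ → E, γ 0 = x ∧
      (∀ t ∈ Icc (0 : ℝ) 1, γ t ∈ U ∧
        HasDerivAt γ (∑ k ∈ Finset.Icc 1 m, μ ^ k • g k (γ t)) t) ∧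
      ‖f μ x - γ 1‖ ≤ C * |μ| ^ (m + 1)

theorem IsFormalInterpolation.isBigO_sub_lieSeries [CompleteSpace E]
    (h : IsFormalInterpolation U f g) (hg : ∀ k, 1 ≤ k → AnalyticOnNhd ℝ (g k) U) (m : ℕ)
    (hx : x ∈ U) :
    (fun μ => f μ x - lieSeries (truncatedField g m) (m + 1) 1 (x, μ)) =O[𝓝 0]
      fun μ => μ ^ (m + 1) := by
  obtain ⟨C, -, r, hr, hγ⟩ := h m x hx
  choose! γ hγ0 hγ hγ1 using hγ
  have hsmall : ∀ᶠ μ in 𝓝 (0 : ℝ), |μ| ≤ r := by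
    filter_upwards [Metric.closedBall_mem_nhds (0 : ℝ) hr] with μ hμ
    simpa using hμ
  have htraj : IsTrajectoryFamily (truncatedField g m) 1 γ := by
    filter_upwards [hsmall] with μ hμ t ht
    rw [smul_truncatedField]
    exact (hγ μ hμ t ht).2
  have hstart : ∀ᶠ μ in 𝓝 0, γ μ 0 = x := hsmall.mono hγ0
  have hflow := htraj.isBigO_sub_lieSeries
    (analyticAt_truncatedField (fun k hk => hg k hk x hx) m) (tendsto_nhds_of_eventually_eq hstart)
    (m + 1) one_pos (right_mem_Icc.2 zero_le_one)
  have herror : (fun μ => f μ x - γ μ 1) =O[𝓝 0] fun μ => μ ^ (m + 1) :=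
    .of_bound C <| hsmall.mono fun μ hμ => by simpa using hγ1 μ hμ
  refine (herror.add hflow).congr' ?_ EventuallyEq.rfl
  filter_upwards [hstart] with μ hμ
  rw [hμ, sub_add_sub_cancel]

theorem isFormalInterpolation_of_isBigO_sub_lieSeries [CompleteSpace E] (hU : IsOpen U)
    (hg : ∀ k, 1 ≤ k → AnalyticOnNhd ℝ (g k) U)
    (h : ∀ m, ∀ x ∈ U, (fun μ => f μ x - lieSeries (truncatedField g m) (m + 1) 1 (x, μ)) =O[𝓝 0]
      fun μ => μ ^ (m + 1)) : IsFormalInterpolation U f g := by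
  intro m x hx
  have hH : AnalyticAt ℝ (truncatedField g m) (x, 0) :=
    analyticAt_truncatedField (fun k hk => hg k hk x hx) m
  obtain ⟨γ, hstart, htraj⟩ := exists_isTrajectoryFamily hH.contDiffAt 1
  have h0 := tendsto_nhds_of_eventually_eq hstart
  have hflow := htraj.isBigO_sub_lieSeries hH h0 (m + 1) one_pos (right_mem_Icc.2 zero_le_one)
  have herror : (fun μ => f μ x - γ μ 1) =O[𝓝 0] fun μ => μ ^ (m + 1) := by
    refine ((h m x hx).sub hflow).congr' ?_ EventuallyEq.rfl
    filter_upwards [hstart] with μ hμ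
    rw [hμ, sub_sub_sub_cancel_right]
  obtain ⟨C, hC, hbound⟩ := exists_pos_eventually_norm_le herror
  obtain ⟨r, hr, hsmall⟩ := exists_pos_forall_abs_le_of_eventually <| hstart.and <|
    (htraj.eventually_mem hH.continuousAt h0 (hU.mem_nhds hx)).and (htraj.and hbound)
  refine ⟨C, hC, r, hr, fun μ hμ => ?_⟩
  obtain ⟨hμ0, hmem, hderiv, hμC⟩ := hsmall μ hμ
  exact ⟨γ μ, hμ0, fun t ht => ⟨hmem t ht, smul_truncatedField g m _ _ ▸ hderiv t ht⟩, hμC⟩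

theorem isBigO_iterate_sub_trajectory [CompleteSpace E] (hU : IsOpen U)
    (hf : ∀ y ∈ U, AnalyticAt ℝ (fun z : E × ℝ => f z.2 z.1) (y, 0)) (hf0 : f 0 x = x)
    (hH : ∀ y ∈ U, AnalyticAt ℝ H (y, 0))
    (h : ∀ y ∈ U, (fun μ => f μ y - lieSeries H n 1 (y, μ)) =O[𝓝 0] fun μ => μ ^ n)
    (hγ : IsTrajectoryFamily H m γ) (hγ0 : ∀ᶠ μ in 𝓝 0, γ μ 0 = x) (hx : x ∈ U) {j : ℕ}
    (hj : j ≤ m) : (fun μ => (f μ)^[j] x - γ μ j) =O[𝓝 0] fun μ => μ ^ n := by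
  induction j with
  | zero =>
    refine (isBigO_zero _ _).congr' ?_ EventuallyEq.rfl
    filter_upwards [hγ0] with μ hμ
    simp [hμ]
  | succ j ih =>
    have hjm : (j : ℝ) + 1 ≤ m := by exact_mod_cast hj
    have hγj : Tendsto (γ · j) (𝓝 0) (𝓝 x) :=
      hγ.tendsto (hH x hx).continuousAt (tendsto_nhds_of_eventually_eq hγ0)
        ⟨j.cast_nonneg, by linarith⟩
    have hγj' : Tendsto (fun μ => (γ μ j, μ)) (𝓝 0) (𝓝 (x, 0)) := hγj.prodMk_nhds tendsto_id
    have hpropagated : (fun μ => f μ ((f μ)^[j] x) - f μ (γ μ j)) =O[𝓝 0] fun μ => μ ^ n := by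
      have hlip := (hf x hx).hasStrictFDerivAt.isBigO_sub.comp_tendsto
        (((tendsto_iterate (hf x hx).continuousAt hf0 j).prodMk_nhds tendsto_id).prodMk_nhds hγj')
      refine hlip.trans ((ih (by lia)).norm_left.congr_left fun μ => ?_).of_norm_left
      simp [Prod.norm_def]
    have hlocal : (fun μ => f μ (γ μ j) - lieSeries H n 1 (γ μ j, μ)) =O[𝓝 0] fun μ => μ ^ n :=
      (isBigO_nhds_of_forall_isBigO hU
        (fun y hy => (hf y hy).fun_sub (analyticAt_lieSeries (hH y hy) n 1)) h hx).comp_tendsto hγj'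
    have hflow : (fun μ => γ μ (j + 1 : ℕ) - lieSeries H n 1 (γ μ j, μ)) =O[𝓝 0]
        fun μ => μ ^ n := by
      simpa using (hγ.comp_const_add j.cast_nonneg hjm).isBigO_sub_lieSeries (hH x hx)
        (by simpa using hγj) n one_pos (right_mem_Icc.2 zero_le_one)
    refine ((hpropagated.add hlocal).sub hflow).congr_left fun μ => ?_
    rw [Function.iterate_succ_apply']
    abel

theorem isBigO_newtonDeriv_iterate_sub [CompleteSpace E] (hU : IsOpen U)
    (hf : ∀ y ∈ U, AnalyticAt ℝ (fun z : E × ℝ => f z.2 z.1) (y, 0)) (hf0 : f 0 x = x)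
    (hH : ∀ y ∈ U, AnalyticAt ℝ H (y, 0)) (hm : 1 ≤ m)
    (h : ∀ y ∈ U, (fun μ => f μ y - lieSeries H (m + 1) 1 (y, μ)) =O[𝓝 0] fun μ => μ ^ (m + 1))
    (hx : x ∈ U) :
    (fun μ => newtonDeriv m (fun j => (f μ)^[j] x) - μ • H (x, μ)) =O[𝓝 0]
      fun μ => μ ^ (m + 1) := by
  obtain ⟨γ, hγ0, hγ⟩ := exists_isTrajectoryFamily (hH x hx).contDiffAt m
  have hiterate (j : ℕ) (hj : j ≤ m) : (fun μ => (f μ)^[j] x - lieSeries H (m + 1) j (x, μ))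
      =O[𝓝 0] fun μ => μ ^ (m + 1) := by
    have hflow := hγ.isBigO_sub_lieSeries (hH x hx) (tendsto_nhds_of_eventually_eq hγ0) (m + 1)
      (by exact_mod_cast hm) (t := j) ⟨j.cast_nonneg, by exact_mod_cast hj⟩
    refine ((isBigO_iterate_sub_trajectory hU hf hf0 hH h hγ hγ0 hx hj).add hflow).congr' ?_
      EventuallyEq.rfl
    filter_upwards [hγ0] with μ hμ
    rw [hμ, sub_add_sub_cancel]
  refine (isBigO_newtonDeriv hiterate).congr_left fun μ => ?_
  rw [newtonDeriv_sub, newtonDeriv_lieSeries hm]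

theorem isBigO_sum_finDiff_sub [CompleteSpace E] (hU : IsOpen U)
    (hf : ∀ y ∈ U, AnalyticAt ℝ (fun z : E × ℝ => f z.2 z.1) (y, 0)) (hf0 : f 0 x = x)
    (hg : ∀ k, 1 ≤ k → AnalyticOnNhd ℝ (g k) U) (m : ℕ)
    (h : ∀ y ∈ U, (fun μ => f μ y - lieSeries (truncatedField g m) (m + 1) 1 (y, μ)) =O[𝓝 0]
      fun μ => μ ^ (m + 1)) (hx : x ∈ U) :
    (fun μ => ∑ k ∈ Finset.Icc 1 m, ((-1 : ℝ) ^ (k - 1) / k) • finDiff (f μ) k x -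
      ∑ k ∈ Finset.Icc 1 m, μ ^ k • g k x) =O[𝓝 0] fun μ => μ ^ (m + 1) := by
  rcases m.eq_zero_or_pos with rfl | hm
  · simpa using isBigO_zero _ _
  · simp only [sum_finDiff_eq_newtonDeriv, ← smul_truncatedField]
    exact isBigO_newtonDeriv_iterate_sub hU hf hf0
      (fun y hy => analyticAt_truncatedField (fun k hk => hg k hk y hy) m) hm h hx

end FormalFlow

theorem formal_interpolation_lemma_general {E : Type*} [NormedAddCommGroup E] [NormedSpace ℝ E]
    [CompleteSpace E] {U : Set E} (hU : IsOpen U) {f : ℝ → E → E}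
    (hf : ∀ x ∈ U, AnalyticAt ℝ (fun z : E × ℝ => f z.2 z.1) (x, 0))
    (hf0 : ∀ x ∈ U, f 0 x = x) :
    ∃ g : ℕ → E → E,
      (∀ k, 1 ≤ k → AnalyticOnNhd ℝ (g k) U) ∧
      IsFormalInterpolation U f g ∧
      (∀ g' : ℕ → E → E, (∀ k, 1 ≤ k → AnalyticOnNhd ℝ (g' k) U) →
        IsFormalInterpolation U f g' → ∀ k, 1 ≤ k → ∀ x ∈ U, g' k x = g k x) ∧
      ∀ m : ℕ, ∀ x ∈ U, ∃ μm > (0 : ℝ),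
        (∀ μ : ℝ, |μ| ≤ μm → ∀ j ≤ m, (f μ)^[j] x ∈ U) ∧
        ∃ C > (0 : ℝ), ∀ μ : ℝ, |μ| ≤ μm →
          ‖(∑ k ∈ Finset.Icc 1 m, ((-1 : ℝ) ^ (k - 1) / k) • finDiff (f μ) k x) -
            ∑ k ∈ Finset.Icc 1 m, μ ^ k • g k x‖ ≤ C * |μ| ^ (m + 1) := by
  let F : E × ℝ → E := fun z => f z.2 z.1
  let g : ℕ → E → E := interpolatingCoeff F
  have hg (k : ℕ) (_ : 1 ≤ k) : AnalyticOnNhd ℝ (g k) U := fun x hx =>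
    analyticAt_interpolatingCoeff (hf x hx) k
  have hflow (m : ℕ) (x : E) (hx : x ∈ U) :
      (fun μ => f μ x - lieSeries (truncatedField g m) (m + 1) 1 (x, μ)) =O[𝓝 0]
        fun μ => μ ^ (m + 1) := by
    rw [truncatedField_interpolatingCoeff]
    exact isBigO_sub_lieSeries_interpolatingField hU hf hf0 m hx
  refine ⟨g, hg, isFormalInterpolation_of_isBigO_sub_lieSeries hU hg hflow,
    fun g' hg' h' k hk x hx => ?_, fun m x hx => ?_⟩
  · obtain ⟨p, rfl⟩ := Nat.exists_eq_add_of_le' hk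
    exact eqOn_of_isBigO_sub_lieSeries_truncatedField (F := F) hU hg hg' hflow
      (fun m y hy => h'.isBigO_sub_lieSeries hg' m hy) p hx
  · obtain ⟨C, hC, hbound⟩ := exists_pos_eventually_norm_le
      (isBigO_sum_finDiff_sub hU hf (hf0 x hx) hg m (hflow m) hx)
    have hmem : ∀ᶠ μ in 𝓝 0, ∀ j ≤ m, (f μ)^[j] x ∈ U := (Set.finite_Iic m).eventually_all.2
      fun j _ => tendsto_iterate (hf x hx).continuousAt (hf0 x hx) j (hU.mem_nhds hx)
    obtain ⟨r, hr, hsmall⟩ := exists_pos_forall_abs_le_of_eventually (hmem.and hbound)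
    exact ⟨r, hr, fun μ hμ => (hsmall μ hμ).1, C, hC, fun μ hμ => (hsmall μ hμ).2⟩

/-- **Formal interpolation lemma.**
Let `f_μ : U → ℝ^s` be a family of maps, jointly analytic in `(x,μ)`, with `f₀ = id`.
There is a unique sequence of analytic functions `g_k : U → ℝ^s` (`k ≥ 1`) such that for
every `m` and `x ∈ U` the time-one map of `G_m = Σ_{k=1}^m μ^k g_k` agrees with `f_μ(x)`
up to `O(μ^{m+1})`; moreover for every `x ∈ U` and `m` there is `μ_m(x) > 0` such that
for `|μ| ≤ μ_m(x)` the iterates `f_μ^k(x)` stay in `U` for `0 ≤ k ≤ m`, and the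
interpolating vector field `X_m(x) = Σ_{k=1}^m ((−1)^{k−1}/k) Δ_k(x)` of `f_μ` satisfies
`X_m(x) = G_m(x) + O(μ^{m+1})`. -/
theorem formal_interpolation_lemma (s : ℕ) (hs : 1 ≤ s)
    (U : Set (Fin s → ℝ)) (hU : IsOpen U)
    (μbar : ℝ) (hμbar : 0 < μbar)
    (f : ℝ → (Fin s → ℝ) → (Fin s → ℝ))
    (hfa : AnalyticOnNhd ℝ (fun z : (Fin s → ℝ) × ℝ => f z.2 z.1)
      (U ×ˢ Metric.closedBall (0 : ℝ) μbar))
    (hf0 : ∀ x ∈ U, f 0 x = x) :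
    ∃ g : ℕ → (Fin s → ℝ) → (Fin s → ℝ),
      (∀ k, 1 ≤ k → AnalyticOnNhd ℝ (g k) U) ∧
      FormalInterpolation s U f g ∧
      (∀ g' : ℕ → (Fin s → ℝ) → (Fin s → ℝ),
        (∀ k, 1 ≤ k → AnalyticOnNhd ℝ (g' k) U) →
        FormalInterpolation s U f g' →
        ∀ k, 1 ≤ k → ∀ x ∈ U, g' k x = g k x) ∧
      ∀ m : ℕ, ∀ x ∈ U, ∃ μm > (0 : ℝ),
        (∀ μ : ℝ, |μ| ≤ μm → ∀ j ≤ m, (f μ)^[j] x ∈ U) ∧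
        ∃ C > (0 : ℝ), ∀ μ : ℝ, |μ| ≤ μm →
          ‖(∑ k ∈ Finset.Icc 1 m, ((-1 : ℝ) ^ (k - 1) / k) • finDiff (f μ) k x) -
            ∑ k ∈ Finset.Icc 1 m, μ ^ k • g k x‖ ≤ C * |μ| ^ (m + 1) :=
  formal_interpolation_lemma_general hU (fun x hx => hfa (x, 0) ⟨hx, by simpa using hμbar.le⟩) hf0
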